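/- The operators O1 = x² ∂_x + x y ∂_y − (1/2) x q ∂_q + (i/2) y ∂_q² + (1/2) x and O2 = x y ∂_x + y² ∂_y + (1/2) y q ∂_q + (i/2) x q² + y commute: [O1, O2] = 0. -/

import Mathlib

open MvPolynomial Complex

noncomputable section

/-- The space of complex polynomials in three variables `x = X 0`, `y = X 1`, `q = X 2`. -/
abbrev V : Type := MvPolynomial (Fin 3) ℂ

/-- Partial derivative `∂_x`. -/
def Dx : Module.End ℂ V := (pderiv (0 : Fin 3)).toLinearMap
/-- Partial derivative `∂_y`. -/
def Dy : Module.End ℂ V := (pderiv (1 : Fin 3)).toLinearMap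
/-- Partial derivative `∂_q`. -/
def Dq : Module.End ℂ V := (pderiv (2 : Fin 3)).toLinearMap
/-- Multiplication by `x`. -/
def Mx : Module.End ℂ V := LinearMap.mulLeft ℂ (X 0)
/-- Multiplication by `y`. -/
def My : Module.End ℂ V := LinearMap.mulLeft ℂ (X 1)
/-- Multiplication by `q`. -/
def Mq : Module.End ℂ V := LinearMap.mulLeft ℂ (X 2)

/-- `X = -y ∂_x - (i/2) q²`. -/
def opX : Module.End ℂ V := -(My * Dx) - (I / 2) • (Mq * Mq)
/-- `H = -x ∂_x + y ∂_y + q ∂_q + 1/2`. -/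
def opH : Module.End ℂ V := -(Mx * Dx) + My * Dy + Mq * Dq + (1 / 2 : ℂ) • 1
/-- `Y = -x ∂_y - (i/2) ∂_q²`. -/
def opY : Module.End ℂ V := -(Mx * Dy) - (I / 2) • (Dq * Dq)
/-- `E = x ∂_x + y ∂_y + 1/2`. -/
def opE : Module.End ℂ V := Mx * Dx + My * Dy + (1 / 2 : ℂ) • 1
/-- The symplectic Dirac operator `D_s = i q ∂_y - ∂_x ∂_q`. -/
def Ds : Module.End ℂ V := I • (Mq * Dy) - Dx * Dq
/-- `X_s = y ∂_q + i x q`. -/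
def Xs : Module.End ℂ V := My * Dq + I • (Mx * Mq)
/-- `O1 = x² ∂_x + x y ∂_y - (1/2) x q ∂_q + (i/2) y ∂_q² + (1/2) x`. -/
def opO1 : Module.End ℂ V :=
  Mx * Mx * Dx + Mx * My * Dy - (1 / 2 : ℂ) • (Mx * Mq * Dq) + (I / 2) • (My * Dq * Dq)
    + (1 / 2 : ℂ) • Mx
/-- `O2 = x y ∂_x + y² ∂_y + (1/2) y q ∂_q + (i/2) x q² + y`. -/
def opO2 : Module.End ℂ V :=
  Mx * My * Dx + My * My * Dy + (1 / 2 : ℂ) • (My * Mq * Dq) + (I / 2) • (Mx * Mq * Mq) + My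

/-
Put `e = (i/2) q²`, `f = (i/2) ∂_q²`, `k = ½ q ∂_q + ¼` and `F = x ∂_x + y ∂_y + ¾`. Then `2k`, `e`,
`f` is the metaplectic `sl₂`-triple; it commutes with `x`, `y` and `F`, and
`O1 = x (F - k) + y f`, `O2 = y (F + k) + x e`.
Since `x` and `y` have degree one for `F`, in `[O1, O2]` the bracket of the first terms is `2xyk`,
the bracket of the last terms is `xy [f, e] = -2xyk`, and each of the two mixed brackets is zero.
-/

attribute [local instance] LieRing.ofAssociativeRing

section Ring

variable {A : Type*} [Ring A]

lemma mul_lie_leibniz (a b c : A) : ⁅a * b, c⁆ = a * ⁅b, c⁆ + ⁅a, c⁆ * b := by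
  simp only [Ring.lie_def]
  noncomm_ring

lemma lie_mul_leibniz (a b c : A) : ⁅a, b * c⁆ = b * ⁅a, c⁆ + ⁅a, b⁆ * c := by
  simp only [Ring.lie_def]
  noncomm_ring

lemma lie_mul_mul_of_commute {x y u v : A} (hxy : Commute x y) :
    ⁅x * u, y * v⁆ = x * ⁅u, y⁆ * v - y * ⁅v, x⁆ * u + x * y * ⁅u, v⁆ := by
  rw [mul_lie_leibniz, lie_mul_leibniz, lie_mul_leibniz, commute_iff_lie_eq.mp hxy, ← lie_skew x v]
  noncomm_ring

/- `2k, e, f` is an `sl₂`-triple; taking half its Cartan element as the variable avoids dividing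
by two in `A`. -/
theorem commute_of_sl2_relations {x y F k e f : A} (hxy : Commute x y)
    (hFx : ⁅F, x⁆ = x) (hFy : ⁅F, y⁆ = y)
    (hke : ⁅k, e⁆ = e) (hkf : ⁅k, f⁆ = -f) (hef : ⁅e, f⁆ = 2 • k)
    (hx : x ∈ Set.centralizer {k, e, f}) (hy : y ∈ Set.centralizer {k, e, f})
    (hF : F ∈ Set.centralizer {k, e, f}) :
    Commute (x * (F - k) + y * f) (y * (F + k) + x * e) := by
  simp only [Set.mem_centralizer_iff, Set.forall_mem_insert, Set.mem_singleton_iff, forall_eq,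
    ← commute_iff_eq, commute_iff_lie_eq] at hx hy hF
  obtain ⟨hkx, hex, hfx⟩ := hx
  obtain ⟨hky, hey, hfy⟩ := hy
  obtain ⟨hkF, heF, hfF⟩ := hF
  have hFk : ⁅F, k⁆ = 0 := by rw [← lie_skew, hkF, neg_zero]
  have hFe : ⁅F, e⁆ = 0 := by rw [← lie_skew, heF, neg_zero]
  have hfk : ⁅f, k⁆ = f := by rw [← lie_skew, hkf, neg_neg]
  have hfe : ⁅f, e⁆ = -(2 • k) := by rw [← lie_skew, hef]
  have lie_first : ⁅x * (F - k), y * (F + k)⁆ = x * y * (2 • k) := by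
    rw [lie_mul_mul_of_commute hxy]
    simp only [sub_lie, add_lie, lie_add, lie_self, hFx, hFy, hkx, hky, hkF, hFk, add_zero,
      sub_zero, ← hxy.eq]
    noncomm_ring
  have lie_mixed_e : ⁅x * (F - k), x * e⁆ = 0 := by
    rw [lie_mul_mul_of_commute (Commute.refl x)]
    simp only [sub_lie, hFx, hkx, hex, hFe, hke]
    noncomm_ring
  have lie_mixed_f : ⁅y * f, y * (F + k)⁆ = 0 := by
    rw [lie_mul_mul_of_commute (Commute.refl y)]
    simp only [add_lie, lie_add, hFy, hky, hfy, hfF, hfk]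
    noncomm_ring
  have lie_last : ⁅y * f, x * e⁆ = -(x * y * (2 • k)) := by
    rw [lie_mul_mul_of_commute hxy.symm, hfx, hey, hfe, hxy.eq]
    noncomm_ring
  rw [commute_iff_lie_eq, add_lie, lie_add, lie_add, lie_first, lie_mixed_e, lie_mixed_f,
    lie_last]
  noncomm_ring

variable {d q : A}

lemma number_lie_position (h : ⁅d, q⁆ = 1) : ⁅q * d, q⁆ = q := by
  rw [mul_lie_leibniz, h, lie_self, mul_one, zero_mul, add_zero]

lemma number_lie_derivative (h : ⁅d, q⁆ = 1) : ⁅q * d, d⁆ = -d := by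
  rw [mul_lie_leibniz, lie_self, ← lie_skew, h, mul_zero, zero_add, neg_one_mul]

lemma number_lie_position_sq (h : ⁅d, q⁆ = 1) : ⁅q * d, q * q⁆ = 2 • (q * q) := by
  rw [lie_mul_leibniz, number_lie_position h, two_nsmul]

lemma number_lie_derivative_sq (h : ⁅d, q⁆ = 1) : ⁅q * d, d * d⁆ = -(2 • (d * d)) := by
  rw [lie_mul_leibniz, number_lie_derivative h]
  noncomm_ring

lemma position_sq_lie_derivative_sq (h : ⁅d, q⁆ = 1) :
    ⁅q * q, d * d⁆ = -(4 • (q * d) + 2 • 1) := by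
  have hqd : ⁅q, d⁆ = -1 := by rw [← lie_skew, h]
  have hdq : d * q = q * d + 1 := by rw [← h, Ring.lie_def, add_sub_cancel]
  rw [mul_lie_leibniz, lie_mul_leibniz, hqd]
  simp only [mul_add, add_mul, mul_neg, neg_mul, mul_one, one_mul, hdq]
  abel

end Ring

section Algebra

variable {R A : Type*} [CommSemiring R]

lemma mem_centralizer_pair_iff [Semiring A] [Algebra R A] {a b c : A} :
    a ∈ Subalgebra.centralizer R {b, c} ↔ Commute b a ∧ Commute c a := by
  simp only [Subalgebra.mem_centralizer_iff, Set.forall_mem_insert, Set.mem_singleton_iff,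
    forall_eq, commute_iff_eq]

lemma smul_one_lie [Ring A] [Algebra R A] (c : R) (a : A) : ⁅c • (1 : A), a⁆ = 0 :=
  commute_iff_lie_eq.mp ((Commute.one_left a).smul_left c)

end Algebra

section Metaplectic

variable {A : Type*} [Ring A] [Algebra ℂ A]

/-- The raising operator `(i/2) q²` of the metaplectic `sl₂`-triple. -/
def metaplecticRaise (q : A) : A := (I / 2) • (q * q)

/-- The lowering operator `(i/2) d²` of the metaplectic `sl₂`-triple, where `d` stands
for `∂_q`. -/
def metaplecticLower (d : A) : A := (I / 2) • (d * d)

/-- Half the Cartan element of the metaplectic `sl₂`-triple, `½ q d + ¼`, where `d` stands for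
`∂_q`. With this normalization its adjoint eigenvalues on the raising and lowering operators
are `±1`. -/
def metaplecticWeight (q d : A) : A := (1 / 2 : ℂ) • (q * d) + (1 / 4 : ℂ) • 1

variable {q d : A}

lemma metaplecticWeight_lie (a : A) :
    ⁅metaplecticWeight q d, a⁆ = (1 / 2 : ℂ) • ⁅q * d, a⁆ := by
  rw [metaplecticWeight, add_lie, smul_lie, smul_one_lie, add_zero]

lemma metaplecticWeight_lie_raise (h : ⁅d, q⁆ = 1) :
    ⁅metaplecticWeight q d, metaplecticRaise q⁆ = metaplecticRaise q := by
  rw [metaplecticWeight_lie, metaplecticRaise, lie_smul, number_lie_position_sq h]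
  module

lemma metaplecticWeight_lie_lower (h : ⁅d, q⁆ = 1) :
    ⁅metaplecticWeight q d, metaplecticLower d⁆ = -metaplecticLower d := by
  rw [metaplecticWeight_lie, metaplecticLower, lie_smul, number_lie_derivative_sq h]
  module

lemma metaplecticRaise_lie_lower (h : ⁅d, q⁆ = 1) :
    ⁅metaplecticRaise q, metaplecticLower d⁆ = 2 • metaplecticWeight q d := by
  have hI : I / 2 * (I / 2) = -(1 / 4) := by linear_combination (1 / 4 : ℂ) * I_mul_I
  rw [metaplecticRaise, metaplecticLower, metaplecticWeight, smul_lie, lie_smul,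
    position_sq_lie_derivative_sq h, smul_smul, hI]
  module

lemma centralizer_le_centralizer_metaplectic :
    Subalgebra.centralizer ℂ {q, d} ≤ Subalgebra.centralizer ℂ
      {metaplecticWeight q d, metaplecticRaise q, metaplecticLower d} := by
  intro a ha
  obtain ⟨hq, hd⟩ := mem_centralizer_pair_iff.mp ha
  simp only [Subalgebra.mem_centralizer_iff, Set.forall_mem_insert, Set.mem_singleton_iff,
    forall_eq, ← commute_iff_eq]
  exact ⟨((hq.mul_left hd).smul_left _).add_left ((Commute.one_left a).smul_left _),
    (hq.mul_left hq).smul_left _, (hd.mul_left hd).smul_left _⟩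

end Metaplectic

lemma commute_mulLeft {R B : Type*} [CommSemiring R] [CommSemiring B] [Algebra R B] (a b : B) :
    Commute (LinearMap.mulLeft R a) (LinearMap.mulLeft R b) :=
  (Commute.all a b).map (Algebra.lmul R B)

lemma derivation_lie_mulLeft {R B : Type*} [CommSemiring R] [CommRing B] [Algebra R B]
    (D : Derivation R B B) (b : B) :
    ⁅(D : Module.End R B), LinearMap.mulLeft R b⁆ = LinearMap.mulLeft R (D b) := by
  ext c
  simp [Ring.lie_def, mul_comm]

section Polynomial

variable {R σ : Type*} [CommRing R] {i j : σ}

lemma pderiv_lie_mulLeft_X_self (i : σ) :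
    ⁅((pderiv i).toLinearMap : Module.End R (MvPolynomial σ R)),
      (LinearMap.mulLeft R (X i) : Module.End R (MvPolynomial σ R))⁆ = 1 := by
  rw [derivation_lie_mulLeft, pderiv_X_self, LinearMap.mulLeft_one, Module.End.one_eq_id]

lemma commute_pderiv_mulLeft_X (h : j ≠ i) :
    Commute ((pderiv i).toLinearMap : Module.End R (MvPolynomial σ R))
      (LinearMap.mulLeft R (X j)) := by
  rw [commute_iff_lie_eq, derivation_lie_mulLeft, pderiv_X_of_ne h, LinearMap.mulLeft_zero_eq_zero]

lemma commute_pderiv (i j : σ) :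
    Commute ((pderiv i).toLinearMap : Module.End R (MvPolynomial σ R))
      ((pderiv j).toLinearMap : Module.End R (MvPolynomial σ R)) := by
  classical
  have h : ⁅pderiv (R := R) i, pderiv (R := R) j⁆ = 0 := by
    refine derivation_ext fun k ↦ ?_
    simp only [Derivation.commutator_apply, pderiv_X, Derivation.zero_apply, Pi.single_apply]
    split_ifs <;> simp
  rw [commute_iff_lie_eq, ← Derivation.commutator_coe_linear_map, h, Derivation.coe_zero_linearMap]

lemma mulLeft_X_mem_centralizer (h : i ≠ j) :
    LinearMap.mulLeft R (X i) ∈ Subalgebra.centralizer R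
      {LinearMap.mulLeft R (X j), ((pderiv j).toLinearMap : Module.End R (MvPolynomial σ R))} :=
  mem_centralizer_pair_iff.mpr ⟨commute_mulLeft _ _, commute_pderiv_mulLeft_X h⟩

lemma pderiv_mem_centralizer (h : i ≠ j) :
    (pderiv i).toLinearMap ∈ Subalgebra.centralizer R
      {LinearMap.mulLeft R (X j), ((pderiv j).toLinearMap : Module.End R (MvPolynomial σ R))} :=
  mem_centralizer_pair_iff.mpr ⟨(commute_pderiv_mulLeft_X h.symm).symm, commute_pderiv j i⟩

end Polynomial

/-- The operator `F = x ∂_x + y ∂_y + ¾`, that is, the Euler operator shifted by the constant for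
which `O1` and `O2` become combinations of `F` and the metaplectic operators in `q`. -/
def shiftedEuler : Module.End ℂ V := opE + (1 / 4 : ℂ) • 1

lemma shiftedEuler_lie (T : Module.End ℂ V) :
    ⁅shiftedEuler, T⁆ = ⁅Mx * Dx, T⁆ + ⁅My * Dy, T⁆ := by
  simp only [shiftedEuler, opE, add_lie, smul_one_lie, add_zero]

lemma Mx_commute_My : Commute Mx My := commute_mulLeft _ _

lemma shiftedEuler_lie_Mx : ⁅shiftedEuler, Mx⁆ = Mx := by
  have hDxMx : ⁅Dx, Mx⁆ = 1 := pderiv_lie_mulLeft_X_self 0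
  have hDyMx : Commute Dy Mx := commute_pderiv_mulLeft_X (by decide)
  rw [shiftedEuler_lie, number_lie_position hDxMx,
    commute_iff_lie_eq.mp (Mx_commute_My.symm.mul_left hDyMx), add_zero]

lemma shiftedEuler_lie_My : ⁅shiftedEuler, My⁆ = My := by
  have hDyMy : ⁅Dy, My⁆ = 1 := pderiv_lie_mulLeft_X_self 1
  have hDxMy : Commute Dx My := commute_pderiv_mulLeft_X (by decide)
  rw [shiftedEuler_lie, number_lie_position hDyMy,
    commute_iff_lie_eq.mp (Mx_commute_My.mul_left hDxMy), zero_add]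

lemma Mx_mem_centralizer : Mx ∈ Subalgebra.centralizer ℂ {Mq, Dq} :=
  mulLeft_X_mem_centralizer (by decide)

lemma My_mem_centralizer : My ∈ Subalgebra.centralizer ℂ {Mq, Dq} :=
  mulLeft_X_mem_centralizer (by decide)

lemma shiftedEuler_mem_centralizer : shiftedEuler ∈ Subalgebra.centralizer ℂ {Mq, Dq} := by
  have hDx : Dx ∈ Subalgebra.centralizer ℂ {Mq, Dq} := pderiv_mem_centralizer (by decide)
  have hDy : Dy ∈ Subalgebra.centralizer ℂ {Mq, Dq} := pderiv_mem_centralizer (by decide)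
  have h_smul_one (c : ℂ) : c • 1 ∈ Subalgebra.centralizer ℂ {Mq, Dq} :=
    Subalgebra.smul_mem _ (one_mem _) c
  exact add_mem (add_mem (add_mem (mul_mem Mx_mem_centralizer hDx)
    (mul_mem My_mem_centralizer hDy)) (h_smul_one _)) (h_smul_one _)

lemma opO1_eq :
    opO1 = Mx * (shiftedEuler - metaplecticWeight Mq Dq) + My * metaplecticLower Dq := by
  simp only [opO1, shiftedEuler, opE, metaplecticWeight, metaplecticLower, mul_add, mul_sub,
    mul_smul_comm, mul_one, ← mul_assoc]
  module

lemma opO2_eq :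
    opO2 = My * (shiftedEuler + metaplecticWeight Mq Dq) + Mx * metaplecticRaise Mq := by
  simp only [opO2, shiftedEuler, opE, metaplecticWeight, metaplecticRaise, mul_add,
    mul_smul_comm, mul_one, ← mul_assoc, ← Mx_commute_My.eq]
  module

/-- The operators `O1` and `O2` commute. -/
theorem O1_O2_commute : opO1 * opO2 - opO2 * opO1 = 0 := by
  have hq : ⁅Dq, Mq⁆ = 1 := pderiv_lie_mulLeft_X_self 2
  rw [opO1_eq, opO2_eq, sub_eq_zero]
  exact commute_of_sl2_relations Mx_commute_My shiftedEuler_lie_Mx shiftedEuler_lie_My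
    (metaplecticWeight_lie_raise hq) (metaplecticWeight_lie_lower hq)
    (metaplecticRaise_lie_lower hq)
    (centralizer_le_centralizer_metaplectic Mx_mem_centralizer)
    (centralizer_le_centralizer_metaplectic My_mem_centralizer)
    (centralizer_le_centralizer_metaplectic shiftedEuler_mem_centralizer)
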